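/- Let n ≥ 6 be an even integer with n ≡ 0 or 6 (mod 8). Then the number of 𝔊_n-orbits O ⊆ T^n satisfying ι(O) = O is exactly 2^{n/2 + 1}. -/

import Mathlib

/-- `M ∈ T^n`: all entries strictly below the diagonal vanish. -/
def UpperTri (n : ℕ) (M : Matrix (Fin n) (Fin n) (ZMod 2)) : Prop :=
  ∀ i j : Fin n, (j : ℕ) < (i : ℕ) → M i j = 0

/-- The involution `ι : T^n → T^n`, `ι(M)_{ij} = M_{(n+1−j)(n+1−i)} + 1` for `i ≤ j`
(one-based indexing; entries below the diagonal remain `0`). -/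
def iotaT (n : ℕ) (M : Matrix (Fin n) (Fin n) (ZMod 2)) : Matrix (Fin n) (Fin n) (ZMod 2) :=
  Matrix.of fun i j => if (i : ℕ) ≤ (j : ℕ) then M (Fin.rev j) (Fin.rev i) + 1 else 0

/-- The height pairing `⟨M, R_k⟩ = ∑_{1 ≤ r ≤ k ≤ s ≤ n} M_{rs}`. -/
def heightPair (n : ℕ) (M : Matrix (Fin n) (Fin n) (ZMod 2)) (k : Fin n) : ZMod 2 :=
  ∑ r : Fin n, ∑ s : Fin n, if r ≤ k ∧ k ≤ s then M r s else 0

/-- Safe entry lookup (zero outside range), with zero-based natural-number indices. -/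
def ent (n : ℕ) (M : Matrix (Fin n) (Fin n) (ZMod 2)) (r s : ℕ) : ZMod 2 :=
  if h : r < n ∧ s < n then M ⟨r, h.1⟩ ⟨s, h.2⟩ else 0

/-- The generator `g_{ij}` of `𝔊_n` (here `i ≤ j` are zero-based, corresponding to the
one-based indices `i+1 ≤ j+1`): it adds the trace `M_{ij} + M_{i+1,j+1}` of the `2×2`
submatrix with rows `i, i+1` and columns `j, j+1` to each entry of that submatrix lying
in the upper triangle. -/
def gmove (n i j : ℕ) (M : Matrix (Fin n) (Fin n) (ZMod 2)) :
    Matrix (Fin n) (Fin n) (ZMod 2) :=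
  Matrix.of fun r s =>
    if ((r : ℕ) = i ∨ (r : ℕ) = i + 1) ∧ ((s : ℕ) = j ∨ (s : ℕ) = j + 1)
        ∧ (r : ℕ) ≤ (s : ℕ)
    then M r s + (ent n M i j + ent n M (i + 1) (j + 1))
    else M r s

/-- One application of a generator `g_{ij}`, `1 ≤ i ≤ j ≤ n−1` (one-based);
in zero-based indices `i ≤ j` and `j + 2 ≤ n`. -/
def Gstep (n : ℕ) (M M' : Matrix (Fin n) (Fin n) (ZMod 2)) : Prop :=
  ∃ i j : ℕ, i ≤ j ∧ j + 2 ≤ n ∧ M' = gmove n i j M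

/-- `N` belongs to the `𝔊_n`-orbit of `M`: the reflexive-transitive closure of the
generating moves (each generator is an involution, so this is the orbit equivalence). -/
def InOrbit (n : ℕ) (M N : Matrix (Fin n) (Fin n) (ZMod 2)) : Prop :=
  Relation.ReflTransGen (Gstep n) M N

/-!
Each generator `g_{ij}` is the transvection `M ↦ M + b(M, E) E` along the block `E = E_{ij}`, for
the polar form `b` of a quadratic form on `T^n` which takes the value `1` on all blocks. Both this
form and the class of `M` modulo the span of the blocks, which is recorded by the heights of `M`,
are therefore constant on orbits. For `n ≥ 5` six of the blocks span a copy of the `E₆` form, on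
which the transvections along basis vectors are transitive on the nonzero vectors of each norm.
Since the blocks are connected through non-orthogonality, transitivity spreads from this core, and
two matrices that are not fixed by all generators share an orbit as soon as their heights and norms
agree.

For even `n` the involution `ι` reverses the height vector, and if that vector is palindromic, `ι`
changes the norm by `C(n + 2, 4)`, which for even `n` is even exactly when `n` is `0` or `6`
modulo `8`. Since `ι` has no fixed points, one-element orbits are not invariant, and the invariant
orbits correspond to the pairs of a palindromic height vector and a norm.
-/

theorem zmod_two_eq_zero_or_one : ∀ a : ZMod 2, a = 0 ∨ a = 1 := by decide

section Transvections

variable {V : Type*} [AddCommGroup V] [Module (ZMod 2) V] {Q : QuadraticForm (ZMod 2) V}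
  {S : Set V}

open QuadraticMap (polar)

/-- The transvection `x ↦ x + b(x, v) v` along `v`, where `b` is the polar form of `Q`; it is an
isometry of `Q` when `Q v = 1`. -/
noncomputable def polarTransvection (Q : QuadraticForm (ZMod 2) V) (v : V) : V →ₗ[ZMod 2] V :=
  LinearMap.transvection (Q.polarBilin v) v

theorem polar_self_eq_zero (v : V) : polar Q v v = 0 := by
  rw [QuadraticMap.polar_self, two_smul, CharTwo.add_self_eq_zero]

theorem polarTransvection_apply (v x : V) :
    polarTransvection Q v x = x + polar Q x v • v := by
  rw [polarTransvection, LinearMap.transvection.apply, QuadraticMap.polarBilin_apply_apply,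
    QuadraticMap.polar_comm]

theorem polarTransvection_of_polar_eq_zero {v x : V} (h : polar Q x v = 0) :
    polarTransvection Q v x = x := by
  rw [polarTransvection_apply, h, zero_smul, add_zero]

theorem polarTransvection_of_polar_eq_one {v x : V} (h : polar Q x v = 1) :
    polarTransvection Q v x = x + v := by
  rw [polarTransvection_apply, h, one_smul]

theorem polar_polarTransvection_left (v x y : V) :
    polar Q (polarTransvection Q v x) y = polar Q x y + polar Q x v * polar Q v y := by
  rw [polarTransvection_apply, QuadraticMap.polar_add_left, QuadraticMap.polar_smul_left,
    smul_eq_mul]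

theorem polarTransvection_involutive (v : V) : Function.Involutive (polarTransvection Q v) := by
  intro x
  rw [polarTransvection_apply, polar_polarTransvection_left, polar_self_eq_zero, mul_zero,
    add_zero, polarTransvection_apply, add_assoc, ZModModule.add_self, add_zero]

theorem map_polarTransvection {v : V} (hv : Q v = 1) (x : V) :
    Q (polarTransvection Q v x) = Q x := by
  rcases zmod_two_eq_zero_or_one (polar Q x v) with h | h
  · rw [polarTransvection_of_polar_eq_zero h]
  · rw [polarTransvection_of_polar_eq_one h, QuadraticMap.map_add Q, hv, h, add_assoc,
      CharTwo.add_self_eq_zero, add_zero]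

theorem polarTransvection_conj (w v x : V) :
    polarTransvection Q (polarTransvection Q w v) x =
      polarTransvection Q w (polarTransvection Q v (polarTransvection Q w x)) := by
  have isometry : polar Q x (polarTransvection Q w v) = polar Q (polarTransvection Q w x) v := by
    rw [QuadraticMap.polar_comm, polar_polarTransvection_left, polar_polarTransvection_left,
      QuadraticMap.polar_comm Q v x, QuadraticMap.polar_comm Q v w, QuadraticMap.polar_comm Q w x,
      mul_comm (polar Q w v)]
  rw [polarTransvection_apply _ x, isometry,
    polarTransvection_apply v (polarTransvection Q w x), map_add, map_smul,
    polarTransvection_involutive w x]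

/-- `Linked Q S x y`: some sequence of transvections along vectors of `S` takes `x` to `y`. -/
def Linked (Q : QuadraticForm (ZMod 2) V) (S : Set V) : V → V → Prop :=
  Relation.ReflTransGen fun x y => ∃ s ∈ S, y = polarTransvection Q s x

/-- `x` is moved by the transvection along some vector of `S`. -/
def Moved (Q : QuadraticForm (ZMod 2) V) (S : Set V) (x : V) : Prop :=
  ∃ s ∈ S, polar Q x s = 1

/-- The vectors along which the transvection preserves every `Linked Q S` class. -/
def linkingVectors (Q : QuadraticForm (ZMod 2) V) (S : Set V) : Set V :=
  {v | ∀ x, Linked Q S x (polarTransvection Q v x)}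

theorem subset_linkingVectors : S ⊆ linkingVectors Q S :=
  fun s hs _ => .single ⟨s, hs, rfl⟩

namespace Linked

theorem symm {x y : V} (h : Linked Q S x y) : Linked Q S y x := by
  induction h with
  | refl => exact .refl
  | tail _ step ih =>
    obtain ⟨s, hs, rfl⟩ := step
    exact ih.head ⟨s, hs, (polarTransvection_involutive s _).symm⟩

theorem map_eq (hS : ∀ s ∈ S, Q s = 1) {x y : V} (h : Linked Q S x y) : Q y = Q x := by
  induction h with
  | refl => rfl
  | tail _ step ih =>
    obtain ⟨s, hs, rfl⟩ := step
    rw [map_polarTransvection (hS s hs), ih]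

theorem add_mem_span {x y : V} (h : Linked Q S x y) : x + y ∈ Submodule.span (ZMod 2) S := by
  induction h with
  | refl => rw [ZModModule.add_self]; exact zero_mem _
  | tail _ step ih =>
    obtain ⟨s, hs, rfl⟩ := step
    rw [polarTransvection_apply, ← add_assoc]
    exact add_mem ih (Submodule.smul_mem _ _ (Submodule.subset_span hs))

theorem moved {x y : V} (h : Linked Q S x y) (hx : Moved Q S x) : Moved Q S y := by
  induction h with
  | refl => exact hx
  | @tail y _ _ step ih =>
    obtain ⟨s, hs, rfl⟩ := step
    rcases zmod_two_eq_zero_or_one (polar Q y s) with h0 | h1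
    · rwa [polarTransvection_of_polar_eq_zero h0]
    · refine ⟨s, hs, ?_⟩
      rw [polar_polarTransvection_left, polar_self_eq_zero, mul_zero, add_zero, h1]

theorem eq_of_not_moved {x y : V} (h : Linked Q S x y) (hx : ¬ Moved Q S x) : y = x := by
  induction h with
  | refl => rfl
  | tail _ step ih =>
    obtain ⟨s, hs, rfl⟩ := step
    rw [ih]
    rcases zmod_two_eq_zero_or_one (polar Q x s) with h0 | h1
    · exact polarTransvection_of_polar_eq_zero h0
    · exact absurd ⟨s, hs, h1⟩ hx

theorem mem_linkingVectors {v w : V} (h : Linked Q S v w)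
    (hv : v ∈ linkingVectors Q S) : w ∈ linkingVectors Q S := by
  induction h with
  | refl => exact hv
  | tail _ step ih =>
    obtain ⟨s, hs, rfl⟩ := step
    intro x
    rw [polarTransvection_conj]
    exact ((subset_linkingVectors hs x).trans (ih _)).trans (subset_linkingVectors hs _)

end Linked

theorem add_mem_linkingVectors {v w : V} (hv : v ∈ linkingVectors Q S)
    (hw : w ∈ linkingVectors Q S) (h : polar Q v w = 1) : v + w ∈ linkingVectors Q S :=
  polarTransvection_of_polar_eq_one h ▸ (hw v).mem_linkingVectors hv

/-- A quadratic space on which the transvections along the spanning set `R` are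
transitive on the nonzero vectors of each norm, and which is so large that both the norm of a
vector and its pairing with a given nonzero vector can be prescribed. -/
structure IsTransitiveCore {U : Type*} [AddCommGroup U] [Module (ZMod 2) U]
    (q : QuadraticForm (ZMod 2) U) (R : Set U) : Prop where
  span_eq_top : Submodule.span (ZMod 2) R = ⊤
  linked : ∀ u v, u ≠ 0 → v ≠ 0 → q u = q v → Linked q R u v
  exists_polar_eq : ∀ u ≠ 0, ∀ a b, ∃ p ≠ 0, p ≠ u ∧ polar q u p = a ∧ q p = b

theorem IsTransitiveCore.nondegenerate {U : Type*} [AddCommGroup U] [Module (ZMod 2) U]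
    {q : QuadraticForm (ZMod 2) U} {R : Set U} (h : IsTransitiveCore q R) :
    q.polarBilin.Nondegenerate := by
  refine (LinearMap.IsRefl.nondegenerate_iff_separatingLeft fun x y hxy => ?_).2 fun u hu => ?_
  · exact (QuadraticMap.polar_comm q y x).trans hxy
  · by_contra hu0
    obtain ⟨p, -, -, hup, -⟩ := h.exists_polar_eq u hu0 1 0
    exact one_ne_zero (hup.symm.trans (hu p))

theorem IsTransitiveCore.moved {U : Type*} [AddCommGroup U] [Module (ZMod 2) U]
    {q : QuadraticForm (ZMod 2) U} {R : Set U} (h : IsTransitiveCore q R) {u : U} (hu : u ≠ 0) :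
    Moved q R u := by
  obtain ⟨p, hp, hpu, -, hqp⟩ := h.exists_polar_eq u hu 0 (q u)
  by_contra hmoved
  exact hpu ((h.linked u p hu hp hqp.symm).eq_of_not_moved hmoved)

/-- An isometric embedding of a transitive core into `(V, Q)` with `R` going into `S`, such that
`S` consists of vectors of norm `1` and is connected in the graph joining `a` to `b` when
`b(a, b) = 1`. -/
structure IsCoreEmbedding {U : Type*} [AddCommGroup U] [Module (ZMod 2) U]
    (Q : QuadraticForm (ZMod 2) V) (S : Set V) {q : QuadraticForm (ZMod 2) U} (R : Set U)
    (φ : q →qᵢ Q) : Prop where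
  core : IsTransitiveCore q R
  map_mem : ∀ r ∈ R, φ r ∈ S
  map_eq_one : ∀ s ∈ S, Q s = 1
  connected : ∃ r ∈ R, ∀ s ∈ S,
    Relation.ReflTransGen (fun a b => b ∈ S ∧ polar Q a b = 1) (φ r) s

theorem polar_isometry_map {U : Type*} [AddCommGroup U] [Module (ZMod 2) U]
    {q : QuadraticForm (ZMod 2) U} (φ : q →qᵢ Q) (c d : U) :
    polar Q (φ c) (φ d) = polar q c d := by
  simp only [polar, ← map_add, φ.map_app]

namespace IsCoreEmbedding

variable {U : Type*} [AddCommGroup U] [Module (ZMod 2) U] [FiniteDimensional (ZMod 2) U]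
  {q : QuadraticForm (ZMod 2) U} {R : Set U} {φ : q →qᵢ Q} (h : IsCoreEmbedding Q S R φ)

/-- The orthogonal projection `V → U` onto the core. -/
noncomputable def proj : V →ₗ[ZMod 2] U :=
  (LinearMap.BilinForm.toDual q.polarBilin h.core.nondegenerate).symm.toLinearMap ∘ₗ
    φ.toLinearMap.dualMap ∘ₗ Q.polarBilin

theorem polar_proj (x : V) (c : U) : polar q (h.proj x) c = polar Q x (φ c) :=
  LinearMap.BilinForm.apply_toDual_symm_apply (hB := h.core.nondegenerate) _ c

theorem proj_map (c : U) : h.proj (φ c) = c := by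
  refine (LinearMap.BilinForm.toDual q.polarBilin h.core.nondegenerate).injective
    (LinearMap.ext fun d => ?_)
  exact (h.polar_proj _ d).trans (polar_isometry_map φ c d)

theorem moved_of_proj_ne_zero {x : V} (hx : h.proj x ≠ 0) : Moved Q S x := by
  obtain ⟨r, hr, hxr⟩ := h.core.moved hx
  exact ⟨φ r, h.map_mem r hr, (h.polar_proj x r).symm.trans hxr⟩

theorem linked_add_map_of_linked {u v : U} (huv : Linked q R u v) {x : V} (hx : h.proj x = u) :
    Linked Q S x (x + φ (u + v)) := by
  induction huv with
  | refl => rw [ZModModule.add_self, map_zero, add_zero]; exact .refl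
  | @tail v _ _ step ih =>
    obtain ⟨r, hr, rfl⟩ := step
    refine ih.tail ⟨φ r, h.map_mem r hr, ?_⟩
    have hpolar : polar Q (x + φ (u + v)) (φ r) = polar q v r := by
      rw [← h.polar_proj, map_add, h.proj_map, hx, ← add_assoc, ZModModule.add_self, zero_add]
    rw [polarTransvection_apply, polarTransvection_apply, hpolar, ← add_assoc u, map_add φ (u + v),
      map_smul, ← add_assoc]

theorem linked_add_map {x : V} {c : U} (hx : h.proj x ≠ 0) (hxc : h.proj (x + φ c) ≠ 0)
    (hQ : Q (x + φ c) = Q x) : Linked Q S x (x + φ c) := by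
  have hproj : h.proj (x + φ c) = h.proj x + c := by rw [map_add, h.proj_map]
  have hq : q (h.proj x) = q (h.proj x + c) := by
    rw [QuadraticMap.map_add Q, add_assoc, add_eq_left] at hQ
    rw [QuadraticMap.map_add q, add_assoc, h.polar_proj, ← φ.map_app c, hQ,
      add_zero]
  have hlinked := h.linked_add_map_of_linked (h.core.linked _ _ hx (hproj ▸ hxc) hq) rfl
  rwa [← add_assoc (h.proj x), ZModModule.add_self, zero_add] at hlinked

theorem exists_add_map {x : V} (hx : h.proj x ≠ 0) (y : V) (a b : ZMod 2) :
    ∃ c, h.proj (y + φ c) ≠ 0 ∧ h.proj (x + (y + φ c)) ≠ 0 ∧ polar Q x (y + φ c) = a ∧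
      Q (y + φ c) = b := by
  set r := y + φ (h.proj y)
  have hr0 : h.proj r = 0 := by rw [map_add, h.proj_map, ZModModule.add_self]
  obtain ⟨p, hp, hpx, hpa, hpb⟩ := h.core.exists_polar_eq _ hx (a + polar Q x r) (b + Q r)
  have hsplit : y + φ (h.proj y + p) = r + φ p := by rw [map_add, ← add_assoc]
  have hprojp : h.proj (r + φ p) = p := by rw [map_add, h.proj_map, hr0, zero_add]
  refine ⟨h.proj y + p, ?_, ?_, ?_, ?_⟩ <;> rw [hsplit]
  · rwa [hprojp]
  · rw [map_add, hprojp]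
    exact fun h0 => hpx ((eq_neg_of_add_eq_zero_right h0).trans (ZModModule.neg_eq_self _))
  · rw [QuadraticMap.polar_add_right, ← h.polar_proj x p, hpa, add_left_comm,
      CharTwo.add_self_eq_zero, add_zero]
  · rw [QuadraticMap.map_add Q, φ.map_app, hpb, ← h.polar_proj, hr0, QuadraticMap.polar_zero_left,
      add_zero, add_left_comm, CharTwo.add_self_eq_zero, add_zero]

/-- The vectors of norm `1` in `x + φ U` that are not orthogonal to the core are linking. The point
of the notion is that it is additive in `x`. -/
def IsGood (x : V) : Prop :=
  ∀ c, h.proj (x + φ c) ≠ 0 → Q (x + φ c) = 1 → x + φ c ∈ linkingVectors Q S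

theorem isGood_of_mem_linkingVectors {x : V} {c : U} (hc : h.proj (x + φ c) ≠ 0)
    (hQ : Q (x + φ c) = 1) (hmem : x + φ c ∈ linkingVectors Q S) : h.IsGood x := by
  intro d hd hQd
  have hcd : x + φ d = x + φ c + φ (c + d) := by
    rw [map_add, add_assoc, ← add_assoc (φ c), ZModModule.add_self, zero_add]
  rw [hcd] at hd hQd ⊢
  exact (h.linked_add_map hc hd (hQd.trans hQ.symm)).mem_linkingVectors hmem

theorem isGood_of_mem_of_proj_ne_zero {s : V} (hs : s ∈ S) (hproj : h.proj s ≠ 0) :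
    h.IsGood s := by
  refine h.isGood_of_mem_linkingVectors (c := 0) ?_ ?_ ?_ <;> rw [map_zero, add_zero]
  exacts [hproj, h.map_eq_one s hs, subset_linkingVectors hs]

theorem exists_map_mem : ∃ r, φ r ∈ S ∧ h.proj (φ r) ≠ 0 := by
  obtain ⟨r, hr, -⟩ := h.connected
  refine ⟨r, h.map_mem r hr, fun h0 => ?_⟩
  have hQr := h.map_eq_one _ (h.map_mem r hr)
  rw [← h.proj_map r, h0, map_zero, QuadraticMap.map_zero] at hQr
  exact zero_ne_one hQr

theorem isGood_zero : h.IsGood 0 := by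
  obtain ⟨r, hr, hr0⟩ := h.exists_map_mem
  refine h.isGood_of_mem_linkingVectors (c := r) ?_ ?_ ?_ <;> rw [zero_add]
  exacts [hr0, h.map_eq_one _ hr, subset_linkingVectors hr]

theorem exists_proj_ne_zero_map_eq (x : V) (b : ZMod 2) :
    ∃ c, h.proj (x + φ c) ≠ 0 ∧ Q (x + φ c) = b := by
  obtain ⟨r, -, hr⟩ := h.exists_map_mem
  obtain ⟨c, hc, -, -, hb⟩ := h.exists_add_map hr x 0 b
  exact ⟨c, hc, hb⟩

variable {h}

theorem IsGood.add {x y : V} (hx : h.IsGood x) (hy : h.IsGood y) : h.IsGood (x + y) := by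
  obtain ⟨c, hc, hQc⟩ := h.exists_proj_ne_zero_map_eq x 1
  obtain ⟨d, hd, hcd, hpolar, hQd⟩ := h.exists_add_map hc y 1 1
  have hsum : x + y + φ (c + d) = (x + φ c) + (y + φ d) := by rw [map_add, add_add_add_comm]
  refine h.isGood_of_mem_linkingVectors (c := c + d) ?_ ?_ ?_ <;> rw [hsum]
  · exact hcd
  · rw [QuadraticMap.map_add Q, hQc, hQd, hpolar, add_assoc, CharTwo.add_self_eq_zero, add_zero]
  · exact add_mem_linkingVectors (hx c hc hQc) (hy d hd hQd) hpolar

theorem IsGood.of_polar_eq_one {a s : V} (ha : h.IsGood a) (hs : s ∈ S) (has : polar Q a s = 1) :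
    h.IsGood s := by
  by_cases hs0 : h.proj s = 0
  · suffices h.IsGood (a + s) by
      have := ha.add this
      rwa [← add_assoc, ZModModule.add_self, zero_add] at this
    obtain ⟨c, hc, hQc⟩ := h.exists_proj_ne_zero_map_eq a 1
    have hpolar : polar Q (a + φ c) s = 1 := by
      rw [QuadraticMap.polar_add_left, has, QuadraticMap.polar_comm, ← h.polar_proj, hs0,
        QuadraticMap.polar_zero_left, add_zero]
    refine h.isGood_of_mem_linkingVectors (c := c) ?_ ?_ ?_ <;> rw [add_right_comm]
    · rwa [map_add, hs0, add_zero]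
    · rw [← polarTransvection_of_polar_eq_one hpolar, map_polarTransvection (h.map_eq_one s hs),
        hQc]
    · exact add_mem_linkingVectors (ha c hc hQc) (subset_linkingVectors hs) hpolar
  · exact h.isGood_of_mem_of_proj_ne_zero hs hs0

variable (h)

theorem isGood_of_mem {s : V} (hs : s ∈ S) : h.IsGood s := by
  obtain ⟨r, -, hconn⟩ := h.connected
  have hpath := hconn s hs
  clear hs
  induction hpath with
  | refl =>
    refine fun c => ?_
    rw [← map_add, ← zero_add (φ (r + c))]
    exact h.isGood_zero (r + c)
  | tail _ step ih => exact ih.of_polar_eq_one step.1 step.2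

theorem isGood_of_mem_span {x : V} (hx : x ∈ Submodule.span (ZMod 2) S) : h.IsGood x := by
  induction hx using Submodule.span_induction with
  | mem s hs => exact h.isGood_of_mem hs
  | zero => exact h.isGood_zero
  | add x y _ _ hx hy => exact hx.add hy
  | smul a x _ hx =>
    rcases zmod_two_eq_zero_or_one a with rfl | rfl
    · rw [zero_smul]; exact h.isGood_zero
    · rwa [one_smul]

theorem linked_of_proj_ne_zero {x y : V} (hx : h.proj x ≠ 0) (hy : h.proj y ≠ 0)
    (hxy : x + y ∈ Submodule.span (ZMod 2) S) (hQ : Q x = Q y) : Linked Q S x y := by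
  obtain ⟨c, hc, hxc, hpolar, hQc⟩ := h.exists_add_map hx (x + y) 1 1
  have hlink := h.isGood_of_mem_span hxy c hc hQc x
  have hxw : x + (x + y + φ c) = y + φ c := by
    rw [← add_assoc, ← add_assoc, ZModModule.add_self, zero_add]
  rw [polarTransvection_of_polar_eq_one hpolar, hxw] at hlink
  refine hlink.trans (h.linked_add_map hy (hxw ▸ hxc) ?_).symm
  rw [← hxw, QuadraticMap.map_add Q, hQc, hpolar, add_assoc, CharTwo.add_self_eq_zero, add_zero, hQ]

theorem exists_linked_proj_ne_zero {x : V} (hx : Moved Q S x) :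
    ∃ y, Linked Q S x y ∧ h.proj y ≠ 0 := by
  by_cases hx0 : h.proj x = 0
  · obtain ⟨s, hs, hxs⟩ := hx
    obtain ⟨c, hc, hQc⟩ := h.exists_proj_ne_zero_map_eq s 1
    have hpolar : polar Q x (s + φ c) = 1 := by
      rw [QuadraticMap.polar_add_right, hxs, ← h.polar_proj, hx0, QuadraticMap.polar_zero_left,
        add_zero]
    refine ⟨_, h.isGood_of_mem hs c hc hQc x, ?_⟩
    rwa [polarTransvection_of_polar_eq_one hpolar, map_add, hx0, zero_add]
  · exact ⟨x, .refl, hx0⟩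

include h in
theorem linked_iff_of_moved {x y : V} (hx : Moved Q S x) (hy : Moved Q S y) :
    Linked Q S x y ↔ x + y ∈ Submodule.span (ZMod 2) S ∧ Q x = Q y := by
  refine ⟨fun hxy => ⟨hxy.add_mem_span, (hxy.map_eq h.map_eq_one).symm⟩, fun ⟨hspan, hQ⟩ => ?_⟩
  obtain ⟨x', hxx', hx'⟩ := h.exists_linked_proj_ne_zero hx
  obtain ⟨y', hyy', hy'⟩ := h.exists_linked_proj_ne_zero hy
  refine hxx'.trans (.trans (h.linked_of_proj_ne_zero hx' hy' ?_ ?_) hyy'.symm)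
  · rw [← ZModModule.add_add_add_cancel x' y y', ← ZModModule.add_add_add_cancel x' x y]
    exact add_mem (add_mem hxx'.symm.add_mem_span hspan) hyy'.add_mem_span
  · rw [hxx'.map_eq h.map_eq_one, hyy'.map_eq h.map_eq_one, hQ]

include h in
theorem exists_moved_map_eq (x : V) (b : ZMod 2) :
    ∃ y, x + y ∈ Submodule.span (ZMod 2) S ∧ Moved Q S y ∧ Q y = b := by
  obtain ⟨c, hc, hQc⟩ := h.exists_proj_ne_zero_map_eq x b
  refine ⟨x + φ c, ?_, h.moved_of_proj_ne_zero hc, hQc⟩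
  rw [← add_assoc, ZModModule.add_self, zero_add]
  have hspan : Submodule.span (ZMod 2) R ≤ (Submodule.span (ZMod 2) S).comap φ.toLinearMap :=
    Submodule.span_le.2 fun r hr => Submodule.subset_span (h.map_mem r hr)
  exact hspan (h.core.span_eq_top ▸ Submodule.mem_top)

end IsCoreEmbedding

end Transvections

section StripCore

open QuadraticMap (polar)

/-- The form `∑ cᵢ² + ∑ cᵢ cⱼ`, the second sum over `i < j ≤ i + 2`. It is equivalent to the
reduction modulo `2` of the `E₆` form; this presentation has a short transvection graph. -/
def stripForm : QuadraticForm (ZMod 2) (Fin 6 → ZMod 2) :=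
  ∑ i : Fin 6, QuadraticMap.linMulLin (LinearMap.proj i)
    (∑ j : Fin 6 with i ≤ j ∧ (j : ℕ) ≤ i + 2, LinearMap.proj j)

/-- The value of the polar form of `stripForm` on `c` and each basis vector. -/
def neighborSum (c : Fin 6 → ZMod 2) : Fin 6 → ZMod 2 :=
  ![c 1 + c 2, c 0 + c 2 + c 3, c 0 + c 1 + c 3 + c 4, c 1 + c 2 + c 4 + c 5, c 2 + c 3 + c 5,
    c 3 + c 4]

theorem stripForm_apply (c : Fin 6 → ZMod 2) :
    stripForm c = c 0 * (c 0 + c 1 + c 2) + c 1 * (c 1 + c 2 + c 3) + c 2 * (c 2 + c 3 + c 4) +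
      c 3 * (c 3 + c 4 + c 5) + c 4 * (c 4 + c 5) + c 5 * c 5 := by
  simp only [stripForm, Finset.sum_filter, Fin.sum_univ_six]
  simp [Fin.le_def, mul_add]

theorem polar_stripForm (c d : Fin 6 → ZMod 2) :
    polar stripForm c d = neighborSum c 0 * d 0 + neighborSum c 1 * d 1 + neighborSum c 2 * d 2 +
      neighborSum c 3 * d 3 + neighborSum c 4 * d 4 + neighborSum c 5 * d 5 := by
  simp only [polar, stripForm_apply, neighborSum, Pi.add_apply, Matrix.cons_val]
  linear_combination (c 0 * d 0 + c 1 * d 1 + c 2 * d 2 + c 3 * d 3 + c 4 * d 4 + c 5 * d 5) *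
    CharTwo.two_eq_zero (R := ZMod 2)

theorem polar_stripForm_single (c : Fin 6 → ZMod 2) (i : Fin 6) :
    polar stripForm c (Pi.single i 1) = neighborSum c i := by
  fin_cases i <;> simp [polar_stripForm]

/-- Whether `t` can be reached from `c` by at most `k` transvections along basis vectors. -/
def reachesWithin (t : Fin 6 → ZMod 2) : ℕ → (Fin 6 → ZMod 2) → Bool
  | 0, c => c = t
  | k + 1, c => c = t ∨ ∃ i, neighborSum c i = 1 ∧ reachesWithin t k (c + Pi.single i 1)

theorem linked_of_reachesWithin {t : Fin 6 → ZMod 2} {k : ℕ} {c : Fin 6 → ZMod 2}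
    (h : reachesWithin t k c) : Linked stripForm (Set.range fun i => Pi.single i 1) c t := by
  induction k generalizing c with
  | zero => rw [of_decide_eq_true h]; exact .refl
  | succ k ih =>
    rcases of_decide_eq_true h with rfl | ⟨i, hi, h⟩
    · exact .refl
    · refine (ih h).head ⟨_, ⟨i, rfl⟩, ?_⟩
      rw [polarTransvection_of_polar_eq_one ((polar_stripForm_single c i).trans hi)]

/-- The nonzero vector of each norm to which all others of that norm are joined. -/
def stripTarget (b : ZMod 2) : Fin 6 → ZMod 2 :=
  if b = 0 then ![0, 1, 0, 0, 1, 0] else ![0, 0, 1, 1, 0, 0]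

set_option maxRecDepth 100000 in
theorem reachesWithin_five_stripTarget (c : Fin 6 → ZMod 2) (hc : c ≠ 0) :
    reachesWithin (stripTarget (stripForm c)) 5 c := by
  rw [stripForm_apply]
  revert c
  simp only [Fin.forall_fin_succ_pi, Fin.forall_fin_zero_pi]
  decide

set_option maxRecDepth 100000 in
theorem exists_polar_stripForm_eq (u : Fin 6 → ZMod 2) (hu : u ≠ 0) (a b : ZMod 2) :
    ∃ p ≠ 0, p ≠ u ∧ polar stripForm u p = a ∧ stripForm p = b := by
  simp only [polar_stripForm, stripForm_apply]
  revert u a b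
  simp only [Fin.forall_fin_succ_pi, Fin.forall_fin_zero_pi, Fin.exists_fin_succ_pi,
    Fin.exists_fin_zero_pi]
  decide

theorem isTransitiveCore_stripForm :
    IsTransitiveCore stripForm (Set.range fun i => Pi.single i 1) where
  span_eq_top := by
    simpa only [← funext (Pi.basisFun_apply (ZMod 2) (Fin 6))] using
      (Pi.basisFun (ZMod 2) (Fin 6)).span_eq
  linked u v hu hv huv := by
    have hlink := linked_of_reachesWithin (reachesWithin_five_stripTarget u hu)
    rw [huv] at hlink
    exact hlink.trans (linked_of_reachesWithin (reachesWithin_five_stripTarget v hv)).symm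
  exists_polar_eq := exists_polar_stripForm_eq

/-- The isometry taking the standard basis to a family `b` with the Gram matrix of `stripForm`. -/
noncomputable def stripIsometry {V : Type*} [AddCommGroup V] [Module (ZMod 2) V]
    {Q : QuadraticForm (ZMod 2) V} (b : Fin 6 → V) (hQ : ∀ i, Q (b i) = 1)
    (hpolar : ∀ i j, i < j → polar Q (b i) (b j) = if (j : ℕ) ≤ i + 2 then 1 else 0) :
    stripForm →qᵢ Q where
  __ := Fintype.linearCombination (ZMod 2) b
  map_app' c := by
    simp only [AddHom.toFun_eq_coe, LinearMap.coe_toAddHom, Fintype.linearCombination_apply,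
      Fin.sum_univ_six, Fin.isValue, QuadraticMap.map_add Q, QuadraticMap.map_smul, hQ,
      smul_eq_mul, mul_one, QuadraticMap.polar_smul_right, QuadraticMap.polar_smul_left,
      zero_lt_one, hpolar, Fin.coe_ofNat_eq_mod, Nat.one_mod, Nat.zero_mod, zero_add,
      Nat.one_le_ofNat, ↓reduceIte, QuadraticMap.polar_add_left, Fin.reduceLT, Nat.reduceMod,
      Std.le_refl, Nat.reduceAdd, Nat.reduceLeDiff, mul_zero, add_zero, Nat.mod_succ,
      stripForm_apply]
    ring

theorem stripIsometry_single {V : Type*} [AddCommGroup V] [Module (ZMod 2) V]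
    {Q : QuadraticForm (ZMod 2) V} {b : Fin 6 → V} (hQ : ∀ i, Q (b i) = 1)
    (hpolar : ∀ i j, i < j → polar Q (b i) (b j) = if (j : ℕ) ≤ i + 2 then 1 else 0) (i : Fin 6) :
    stripIsometry b hQ hpolar (Pi.single i 1) = b i :=
  (Fintype.linearCombination_apply_single (ZMod 2) b i 1).trans (one_smul _ _)

end StripCore

section CornerSums

variable {n : ℕ}

open Finset

/-- The entry functional `M ↦ ent n M r s`. -/
def entryFunctional (n r s : ℕ) : Matrix (Fin n) (Fin n) (ZMod 2) →ₗ[ZMod 2] ZMod 2 where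
  toFun M := ent n M r s
  map_add' M N := by unfold ent; split_ifs <;> simp
  map_smul' a M := by unfold ent; split_ifs <;> simp

theorem entryFunctional_apply (r s : ℕ) (M : Matrix (Fin n) (Fin n) (ZMod 2)) :
    entryFunctional n r s M = ent n M r s := rfl

/-- The sum of the entries in the first `k` rows and in the columns from `l` on (counted from
zero), as a functional of the matrix. -/
def corner (n k l : ℕ) : Matrix (Fin n) (Fin n) (ZMod 2) →ₗ[ZMod 2] ZMod 2 :=
  ∑ r ∈ range k, ∑ s ∈ Ico l n, entryFunctional n r s

theorem corner_apply (k l : ℕ) (M : Matrix (Fin n) (Fin n) (ZMod 2)) :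
    corner n k l M = ∑ r ∈ range k, ∑ s ∈ Ico l n, ent n M r s := by
  simp only [corner, LinearMap.sum_apply, entryFunctional_apply]

theorem corner_zero_left (l : ℕ) (M : Matrix (Fin n) (Fin n) (ZMod 2)) : corner n 0 l M = 0 := by
  rw [corner_apply, range_zero, sum_empty]

theorem corner_of_le {k l : ℕ} (h : n ≤ l) (M : Matrix (Fin n) (Fin n) (ZMod 2)) :
    corner n k l M = 0 := by
  simp only [corner_apply, Ico_eq_empty_of_le h, sum_empty, sum_const_zero]

theorem ent_eq_corner (r s : ℕ) (M : Matrix (Fin n) (Fin n) (ZMod 2)) :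
    ent n M r s = corner n (r + 1) s M + corner n r s M + corner n (r + 1) (s + 1) M +
      corner n r (s + 1) M := by
  have hrow (l : ℕ) :
      corner n (r + 1) l M + corner n r l M = ∑ t ∈ Ico l n, ent n M r t := by
    rw [corner_apply, corner_apply, sum_range_succ, add_right_comm, CharTwo.add_self_eq_zero,
      zero_add]
  rw [add_assoc _ (corner n (r + 1) (s + 1) M), hrow, hrow]
  rcases lt_or_ge s n with hs | hs
  · rw [sum_eq_sum_Ico_succ_bot hs, add_assoc, CharTwo.add_self_eq_zero, add_zero]
  · rw [Ico_eq_empty_of_le hs, Ico_eq_empty_of_le (hs.trans s.le_succ), sum_empty, add_zero, ent,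
      dif_neg fun h => hs.not_gt h.2]

theorem corner_eq_sum (k l : ℕ) (M : Matrix (Fin n) (Fin n) (ZMod 2)) :
    corner n k l M = ∑ r : Fin n, ∑ s : Fin n, if (r : ℕ) < k ∧ l ≤ (s : ℕ) then M r s else 0 := by
  have hrow (r : Fin n) :
      (∑ s : Fin n, if (r : ℕ) < k ∧ l ≤ (s : ℕ) then M r s else 0) =
        if (r : ℕ) < k then ∑ s ∈ Ico l n, ent n M r s else 0 := by
    have hIco : Ico l n = (range n).filter (l ≤ ·) := by ext; simp; omega
    rw [hIco, sum_filter, sum_range]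
    by_cases hr : (r : ℕ) < k <;> simp [ent, hr]
  rw [corner_apply, sum_congr rfl fun r _ => hrow r,
    ← sum_range fun r => if r < k then ∑ s ∈ Ico l n, ent n M r s else 0, ← sum_filter]
  refine (sum_subset (fun r => by simp) fun r hrk hr => sum_eq_zero fun s _ => dif_neg ?_).symm
  simp only [mem_filter, mem_range] at hr hrk
  omega

theorem heightPair_eq_corner (M : Matrix (Fin n) (Fin n) (ZMod 2)) (k : Fin n) :
    heightPair n M k = corner n (k + 1) k M := by
  simp only [heightPair, corner_eq_sum, Nat.lt_succ_iff, Fin.le_def]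

theorem heightPair_add (M N : Matrix (Fin n) (Fin n) (ZMod 2)) :
    heightPair n (M + N) = heightPair n M + heightPair n N := by
  ext k
  simp only [Pi.add_apply, heightPair_eq_corner, map_add]

theorem UpperTri.ext_corner {M N : Matrix (Fin n) (Fin n) (ZMod 2)} (hM : UpperTri n M)
    (hN : UpperTri n N) (h : ∀ k l, k ≤ l + 1 → corner n k l M = corner n k l N) : M = N := by
  ext i j
  rcases lt_or_ge (j : ℕ) i with hij | hij
  · rw [hM i j hij, hN i j hij]
  · have hent : ent n M i j = ent n N i j := by
      rw [ent_eq_corner, ent_eq_corner, h _ _ (by omega), h _ _ (by omega), h _ _ (by omega),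
        h _ _ (by omega)]
    simpa [ent] using hent

/-- The part in the upper triangle of the all-ones matrix on rows `i, i + 1` and columns
`j, j + 1`. -/
def block (n i j : ℕ) : Matrix (Fin n) (Fin n) (ZMod 2) :=
  Matrix.of fun r s =>
    if ((r : ℕ) = i ∨ (r : ℕ) = i + 1) ∧ ((s : ℕ) = j ∨ (s : ℕ) = j + 1) ∧ (r : ℕ) ≤ (s : ℕ)
    then 1 else 0

theorem gmove_eq_add_smul_block (i j : ℕ) (M : Matrix (Fin n) (Fin n) (ZMod 2)) :
    gmove n i j M = M + (ent n M i j + ent n M (i + 1) (j + 1)) • block n i j := by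
  ext r s
  simp only [gmove, block, Matrix.of_apply, Matrix.add_apply, Matrix.smul_apply]
  split_ifs <;> simp

theorem upperTri_block (i j : ℕ) : UpperTri n (block n i j) := by
  intro r s hsr
  rw [block, Matrix.of_apply, if_neg (by omega)]

variable {i j : ℕ}

theorem ent_block (hij : i ≤ j) (hj : j + 2 ≤ n) (r s : ℕ) :
    ent n (block n i j) r s =
      if (r = i ∨ r = i + 1) ∧ (s = j ∨ s = j + 1) ∧ r ≤ s then 1 else 0 := by
  rw [ent]
  split_ifs with h1 h2 h2
  · exact if_pos h2
  · exact if_neg h2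
  · omega
  · rfl

theorem corner_block (hij : i ≤ j) (hj : j + 2 ≤ n) {k l : ℕ} (hkl : k ≤ l + 1) :
    corner n k l (block n i j) = if k = i + 1 ∧ l = j + 1 then 1 else 0 := by
  have hsplit : ∀ r ∈ range k, ∀ s ∈ Ico l n, ent n (block n i j) r s =
      ((if r = i then 1 else 0) + if r = i + 1 then 1 else 0) *
        ((if s = j then 1 else 0) + if s = j + 1 then 1 else 0) := by
    intro r hr s hs
    rw [mem_range] at hr
    rw [mem_Ico] at hs
    rw [ent_block hij hj]
    split_ifs <;> first | omega | rfl
  rw [corner_apply, sum_congr rfl fun r hr => sum_congr rfl (hsplit r hr), ← sum_mul_sum]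
  simp only [sum_add_distrib, sum_ite_eq', mem_range, mem_Ico]
  split_ifs <;> first | omega | rfl

end CornerSums

section CornerForm

variable {n : ℕ}

open QuadraticMap (polar)
open Finset

/-- The coordinates of the corner sums within the upper triangle. The vanishing ones (`k = 0` or
`l = n`) are kept to make the index set of `cornerForm` uniform. -/
def cells (n : ℕ) : Finset (ℕ × ℕ) :=
  {p ∈ range (n + 1) ×ˢ range (n + 1) | p.1 ≤ p.2}

theorem mem_cells {p : ℕ × ℕ} : p ∈ cells n ↔ p.1 ≤ p.2 ∧ p.2 ≤ n := by
  simp only [cells, mem_filter, mem_product, mem_range]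
  omega

/-- The sum of the corner sums at `p` and at its neighbours in the directions `(0, -1)`, `(1, 0)`
and `(1, 1)`, three of the six directions of the triangular lattice. The truncation of `p.2 - 1` is
harmless: on `cells` it happens only at `(0, 0)`, where the corner sum vanishes. -/
def forwardCorner (n : ℕ) (p : ℕ × ℕ) : Matrix (Fin n) (Fin n) (ZMod 2) →ₗ[ZMod 2] ZMod 2 :=
  corner n p.1 p.2 + corner n p.1 (p.2 - 1) + corner n (p.1 + 1) p.2 + corner n (p.1 + 1) (p.2 + 1)

/-- The quadratic form invariant under the generators of `𝔊_n`: the number, modulo `2`, of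
vertices and edges of the triangular lattice on `cells n` on which the corner sums are `1`
(including the edges to the cells just below the diagonal). -/
def cornerForm (n : ℕ) : QuadraticForm (ZMod 2) (Matrix (Fin n) (Fin n) (ZMod 2)) :=
  ∑ p ∈ cells n, QuadraticMap.linMulLin (corner n p.1 p.2) (forwardCorner n p)

theorem cornerForm_apply (M : Matrix (Fin n) (Fin n) (ZMod 2)) :
    cornerForm n M = ∑ p ∈ cells n, corner n p.1 p.2 M * forwardCorner n p M := by
  simp [cornerForm]

theorem polar_cornerForm (M N : Matrix (Fin n) (Fin n) (ZMod 2)) :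
    polar (cornerForm n) M N =
      ∑ p ∈ cells n, (corner n p.1 p.2 M * forwardCorner n p N +
        corner n p.1 p.2 N * forwardCorner n p M) := by
  simp only [polar, cornerForm_apply, map_add, ← sum_sub_distrib]
  exact sum_congr rfl fun p _ => by ring

variable {i j : ℕ}

theorem corner_block_of_mem_cells (hij : i ≤ j) (hj : j + 2 ≤ n) {p : ℕ × ℕ} (hp : p ∈ cells n) :
    corner n p.1 p.2 (block n i j) = if p = (i + 1, j + 1) then 1 else 0 := by
  rw [corner_block hij hj (by rw [mem_cells] at hp; omega)]
  simp only [Prod.ext_iff]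

theorem forwardCorner_block (hij : i ≤ j) (hj : j + 2 ≤ n) {p : ℕ × ℕ} (hp : p ∈ cells n) :
    forwardCorner n p (block n i j) =
      (if p = (i + 1, j + 1) then 1 else 0) + (if p = (i + 1, j + 2) then 1 else 0) +
        (if p = (i, j + 1) then 1 else 0) + (if p = (i, j) then 1 else 0) := by
  obtain ⟨k, l⟩ := p
  rw [mem_cells] at hp
  simp only [forwardCorner, LinearMap.add_apply, Prod.mk.injEq]
  rw [corner_block hij hj (by omega), corner_block hij hj (by omega),
    corner_block hij hj (by omega), corner_block hij hj (by omega)]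
  have hl : (k = i + 1 ∧ l - 1 = j + 1) ↔ (k = i + 1 ∧ l = j + 2) := by omega
  simp only [hl, Nat.add_right_cancel_iff]

theorem cornerForm_block (hij : i ≤ j) (hj : j + 2 ≤ n) : cornerForm n (block n i j) = 1 := by
  have hmem : (i + 1, j + 1) ∈ cells n := mem_cells.2 ⟨by simpa, by simp; omega⟩
  rw [cornerForm_apply, sum_eq_single_of_mem (i + 1, j + 1) hmem fun p hp hne => by
    rw [corner_block_of_mem_cells hij hj hp, if_neg hne, zero_mul]]
  simp [corner_block_of_mem_cells hij hj hmem, forwardCorner_block hij hj hmem]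

theorem polar_cornerForm_block (hij : i ≤ j) (hj : j + 2 ≤ n)
    (M : Matrix (Fin n) (Fin n) (ZMod 2)) :
    polar (cornerForm n) M (block n i j) = ent n M i j + ent n M (i + 1) (j + 1) := by
  have h₁ : i ≤ j + 1 := by omega
  have h₂ : j ≤ n := by omega
  have h₃ : j + 1 ≤ n := by omega
  have hsum : polar (cornerForm n) M (block n i j) =
      corner n (i + 1) (j + 1) M + corner n (i + 1) (j + 2) M + corner n i (j + 1) M +
        corner n i j M + forwardCorner n (i + 1, j + 1) M := by
    rw [polar_cornerForm, sum_congr rfl fun p hp => by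
      rw [corner_block_of_mem_cells hij hj hp, forwardCorner_block hij hj hp]]
    simp [mul_add, sum_add_distrib, mem_cells, hij, h₁, h₂, h₃, hj]
  rw [hsum, ent_eq_corner, ent_eq_corner]
  simp only [forwardCorner, LinearMap.add_apply, Nat.add_sub_cancel]
  ring

/-- The vectors of the transvections `g_{ij}`. -/
def blocks (n : ℕ) : Set (Matrix (Fin n) (Fin n) (ZMod 2)) :=
  {E | ∃ i j, i ≤ j ∧ j + 2 ≤ n ∧ E = block n i j}

theorem block_mem_blocks (hij : i ≤ j) (hj : j + 2 ≤ n) : block n i j ∈ blocks n :=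
  ⟨i, j, hij, hj, rfl⟩

theorem cornerForm_eq_one_of_mem_blocks : ∀ E ∈ blocks n, cornerForm n E = 1 := by
  rintro _ ⟨i, j, hij, hj, rfl⟩
  exact cornerForm_block hij hj

theorem gmove_eq_polarTransvection (hij : i ≤ j) (hj : j + 2 ≤ n)
    (M : Matrix (Fin n) (Fin n) (ZMod 2)) :
    gmove n i j M = polarTransvection (cornerForm n) (block n i j) M := by
  rw [gmove_eq_add_smul_block, polarTransvection_apply, polar_cornerForm_block hij hj]

theorem inOrbit_iff_linked {M N : Matrix (Fin n) (Fin n) (ZMod 2)} :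
    InOrbit n M N ↔ Linked (cornerForm n) (blocks n) M N := by
  suffices Gstep n = fun M N => ∃ E ∈ blocks n, N = polarTransvection (cornerForm n) E M by
    rw [InOrbit, Linked, this]
  ext M N
  constructor
  · rintro ⟨i, j, hij, hj, rfl⟩
    exact ⟨_, block_mem_blocks hij hj, gmove_eq_polarTransvection hij hj M⟩
  · rintro ⟨_, ⟨i, j, hij, hj, rfl⟩, rfl⟩
    exact ⟨i, j, hij, hj, (gmove_eq_polarTransvection hij hj M).symm⟩

theorem polar_block_column_succ (hij : i ≤ j) (hj : j + 3 ≤ n) :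
    polar (cornerForm n) (block n i j) (block n i (j + 1)) = 1 := by
  rw [polar_cornerForm_block (by omega) hj, ent_block hij (by omega), ent_block hij (by omega),
    if_pos (by omega), if_neg (by omega), add_zero]

theorem polar_block_row_succ (hij : i + 1 ≤ j) (hj : j + 2 ≤ n) :
    polar (cornerForm n) (block n i j) (block n (i + 1) j) = 1 := by
  rw [polar_cornerForm_block hij hj, ent_block (by omega) hj, ent_block (by omega) hj,
    if_pos (by omega), if_neg (by omega), add_zero]

theorem blocks_connected (hij : i ≤ j) (hj : j + 2 ≤ n) :
    Relation.ReflTransGen (fun E F => F ∈ blocks n ∧ polar (cornerForm n) E F = 1)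
      (block n 0 0) (block n i j) := by
  induction i with
  | zero =>
    induction j with
    | zero => exact .refl
    | succ j ih =>
      exact (ih (by omega) (by omega)).tail
        ⟨block_mem_blocks hij hj, polar_block_column_succ (by omega) hj⟩
  | succ i ih =>
    exact (ih (by omega)).tail ⟨block_mem_blocks hij hj, polar_block_row_succ hij hj⟩

/-- Six blocks along the diagonal strip of width two, with the Gram matrix of `stripForm`. -/
def stripBlock (n : ℕ) (i : Fin 6) : Matrix (Fin n) (Fin n) (ZMod 2) :=
  block n (i / 2) ((i + 1) / 2)

theorem stripBlock_mem_blocks (hn : 5 ≤ n) (i : Fin 6) : stripBlock n i ∈ blocks n :=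
  block_mem_blocks (by omega) (by omega)

theorem polar_stripBlock (hn : 5 ≤ n) (i j : Fin 6) (hij : i < j) :
    polar (cornerForm n) (stripBlock n i) (stripBlock n j) = if (j : ℕ) ≤ i + 2 then 1 else 0 := by
  rw [stripBlock, stripBlock, polar_cornerForm_block (by omega) (by omega),
    ent_block (by omega) (by omega), ent_block (by omega) (by omega)]
  split_ifs <;> first | omega | rfl

theorem isCoreEmbedding_stripIsometry (hn : 5 ≤ n) :
    IsCoreEmbedding (cornerForm n) (blocks n) (Set.range fun i => Pi.single i 1)
      (stripIsometry (stripBlock n)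
        (fun i => cornerForm_eq_one_of_mem_blocks _ (stripBlock_mem_blocks hn i))
        (polar_stripBlock hn)) where
  core := isTransitiveCore_stripForm
  map_mem := by
    rintro _ ⟨i, rfl⟩
    rw [stripIsometry_single]
    exact stripBlock_mem_blocks hn i
  map_eq_one := cornerForm_eq_one_of_mem_blocks
  connected := by
    refine ⟨_, ⟨0, rfl⟩, ?_⟩
    rintro _ ⟨i, j, hij, hj, rfl⟩
    rw [stripIsometry_single]
    exact blocks_connected hij hj

end CornerForm

section BlockSpan

variable {n : ℕ}

open Finset

theorem map_add_of_mem_span {V α : Type*} [AddCommGroup V] [Module (ZMod 2) V] {S : Set V}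
    {f : V → α} (hf : ∀ x, ∀ s ∈ S, f (x + s) = f x) {e : V}
    (he : e ∈ Submodule.span (ZMod 2) S) (x : V) : f (x + e) = f x := by
  induction he using Submodule.span_induction generalizing x with
  | mem s hs => exact hf x s hs
  | zero => rw [add_zero]
  | add d e _ _ hd he => rw [← add_assoc, he, hd]
  | smul a e _ he =>
    rcases zmod_two_eq_zero_or_one a with rfl | rfl
    · rw [zero_smul, add_zero]
    · rw [one_smul, he]

theorem UpperTri.add {M N : Matrix (Fin n) (Fin n) (ZMod 2)} (hM : UpperTri n M)
    (hN : UpperTri n N) : UpperTri n (M + N) := fun i j hji => by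
  rw [Matrix.add_apply, hM i j hji, hN i j hji, add_zero]

theorem UpperTri.add_iff {M N : Matrix (Fin n) (Fin n) (ZMod 2)} (hN : UpperTri n N) :
    UpperTri n (M + N) ↔ UpperTri n M :=
  ⟨fun h => by simpa only [add_assoc, ZModModule.add_self, add_zero] using h.add hN,
    fun h => h.add hN⟩

theorem upperTri_of_mem_span_blocks {E : Matrix (Fin n) (Fin n) (ZMod 2)}
    (hE : E ∈ Submodule.span (ZMod 2) (blocks n)) : UpperTri n E := by
  rw [← zero_add E, map_add_of_mem_span (f := UpperTri n) _ hE]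
  · exact fun _ _ _ => rfl
  · rintro M _ ⟨i, j, -, -, rfl⟩
    exact propext (upperTri_block i j).add_iff

theorem heightPair_add_block {i j : ℕ} (hij : i ≤ j) (hj : j + 2 ≤ n)
    (M : Matrix (Fin n) (Fin n) (ZMod 2)) : heightPair n (M + block n i j) = heightPair n M := by
  ext k
  rw [heightPair_eq_corner, map_add, corner_block hij hj (by rfl), if_neg (by omega), add_zero,
    heightPair_eq_corner]

theorem heightPair_of_mem_span_blocks {E : Matrix (Fin n) (Fin n) (ZMod 2)}
    (hE : E ∈ Submodule.span (ZMod 2) (blocks n)) : heightPair n E = 0 := by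
  rw [← zero_add E, map_add_of_mem_span (f := heightPair n) _ hE]
  · ext k
    rw [heightPair_eq_corner, map_zero, Pi.zero_apply]
  · rintro M _ ⟨i, j, hij, hj, rfl⟩
    exact heightPair_add_block hij hj M

theorem corner_eq_zero_of_heightPair_eq_zero {M : Matrix (Fin n) (Fin n) (ZMod 2)}
    (hM : heightPair n M = 0) {k l : ℕ} (hkl : k ≤ l + 1) (h : ¬ (0 < k ∧ k ≤ l ∧ l < n)) :
    corner n k l M = 0 := by
  rcases le_or_gt n l with hl | hl
  · exact corner_of_le hl M
  rcases Nat.eq_zero_or_pos k with rfl | hk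
  · exact corner_zero_left l M
  · obtain rfl : k = l + 1 := by omega
    simpa only [heightPair_eq_corner, Pi.zero_apply] using congrFun hM ⟨l, hl⟩

theorem UpperTri.mem_span_blocks {M : Matrix (Fin n) (Fin n) (ZMod 2)} (hM : UpperTri n M)
    (hheight : heightPair n M = 0) : M ∈ Submodule.span (ZMod 2) (blocks n) := by
  let I : Finset (ℕ × ℕ) := {p ∈ range n ×ˢ range n | p.1 ≤ p.2 ∧ p.2 + 2 ≤ n}
  have hI {p : ℕ × ℕ} : p ∈ I ↔ p.1 ≤ p.2 ∧ p.2 + 2 ≤ n := by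
    simp only [I, mem_filter, mem_product, mem_range]
    omega
  let N := ∑ p ∈ I, corner n (p.1 + 1) (p.2 + 1) M • block n p.1 p.2
  have hN : N ∈ Submodule.span (ZMod 2) (blocks n) := sum_mem fun p hp =>
    Submodule.smul_mem _ _ (Submodule.subset_span (block_mem_blocks (hI.1 hp).1 (hI.1 hp).2))
  suffices M = N from this ▸ hN
  refine hM.ext_corner (upperTri_of_mem_span_blocks hN) fun k l hkl => ?_
  have hcorner : corner n k l N =
      ∑ p ∈ I, if (p.1 + 1, p.2 + 1) = (k, l) then corner n k l M else 0 := by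
    rw [map_sum]
    refine sum_congr rfl fun p hp => ?_
    rw [map_smul, corner_block (hI.1 hp).1 (hI.1 hp).2 hkl, smul_eq_mul, mul_ite, mul_one, mul_zero]
    refine ite_congr (by simp only [Prod.ext_iff, eq_comm]) (fun h => ?_) fun _ => rfl
    obtain ⟨rfl, rfl⟩ := Prod.mk.inj h
    rfl
  rw [hcorner]
  by_cases hkl' : 0 < k ∧ k ≤ l ∧ l < n
  · obtain ⟨i, rfl⟩ : ∃ i, k = i + 1 := ⟨k - 1, by omega⟩
    obtain ⟨j, rfl⟩ : ∃ j, l = j + 1 := ⟨l - 1, by omega⟩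
    rw [sum_eq_single_of_mem (i, j) (hI.2 (by omega)) fun p _ hp => if_neg fun h => hp ?_,
      if_pos rfl]
    simpa only [Prod.ext_iff, Nat.add_right_cancel_iff] using h
  · rw [sum_eq_zero fun p hp => if_neg fun h => hkl' ?_]
    · exact corner_eq_zero_of_heightPair_eq_zero hheight hkl hkl'
    · rw [hI] at hp
      rw [Prod.ext_iff] at h
      omega

theorem UpperTri.add_mem_span_blocks_iff {M N : Matrix (Fin n) (Fin n) (ZMod 2)}
    (hM : UpperTri n M) (hN : UpperTri n N) :
    M + N ∈ Submodule.span (ZMod 2) (blocks n) ↔ heightPair n M = heightPair n N := by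
  rw [← sub_eq_zero, ZModModule.sub_eq_add, ← heightPair_add]
  exact ⟨heightPair_of_mem_span_blocks, (hM.add hN).mem_span_blocks⟩

end BlockSpan

section Diagonal

variable {n : ℕ}

open Finset

theorem upperTri_diagonal (η : Fin n → ZMod 2) : UpperTri n (Matrix.diagonal η) :=
  fun i j hji => Matrix.diagonal_apply_ne η (by rintro rfl; exact hji.false)

theorem corner_diagonal (k l : ℕ) (η : Fin n → ZMod 2) :
    corner n k l (Matrix.diagonal η) =
      ∑ a : Fin n, if (a : ℕ) < k ∧ l ≤ (a : ℕ) then η a else 0 := by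
  rw [corner_eq_sum]
  refine sum_congr rfl fun r _ => ?_
  rw [sum_eq_single r _ (by simp), Matrix.diagonal_apply_eq]
  intro s _ hsr
  rw [Matrix.diagonal_apply_ne η hsr.symm, ite_self]

theorem corner_diagonal_of_le {k l : ℕ} (hkl : k ≤ l) (η : Fin n → ZMod 2) :
    corner n k l (Matrix.diagonal η) = 0 := by
  rw [corner_diagonal]
  exact sum_eq_zero fun a _ => if_neg (by omega)

theorem heightPair_diagonal (η : Fin n → ZMod 2) : heightPair n (Matrix.diagonal η) = η := by
  ext k
  rw [heightPair_eq_corner, corner_diagonal, sum_eq_single k _ (by simp), if_pos (by simp)]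
  exact fun a _ hak => if_neg (by omega)

theorem cornerForm_diagonal (η : Fin n → ZMod 2) : cornerForm n (Matrix.diagonal η) = 0 := by
  rw [cornerForm_apply]
  refine sum_eq_zero fun p hp => ?_
  rw [corner_diagonal_of_le (mem_cells.1 hp).1, zero_mul]

theorem forwardCorner_diagonal {p : ℕ × ℕ} (hp : p ∈ cells n) (η : Fin n → ZMod 2) :
    forwardCorner n p (Matrix.diagonal η) =
      ∑ a : Fin n, ((if p = ((a : ℕ), (a : ℕ)) then η a else 0) +
        if p = ((a : ℕ) + 1, (a : ℕ) + 1) then η a else 0) := by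
  obtain ⟨hkl, -⟩ := mem_cells.1 hp
  simp only [forwardCorner, LinearMap.add_apply]
  rw [corner_diagonal_of_le hkl, corner_diagonal_of_le (Nat.succ_le_succ hkl), zero_add, add_zero,
    add_comm, corner_diagonal, corner_diagonal, ← sum_add_distrib]
  refine sum_congr rfl fun a _ => ?_
  congr 2 <;> rw [Prod.ext_iff, eq_iff_iff] <;> dsimp only <;> omega

theorem polar_cornerForm_diagonal (M : Matrix (Fin n) (Fin n) (ZMod 2)) (η : Fin n → ZMod 2) :
    QuadraticMap.polar (cornerForm n) M (Matrix.diagonal η) =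
      ∑ a : Fin n, (corner n a a M + corner n (a + 1) (a + 1) M) * η a := by
  have hterm : ∀ p ∈ cells n, corner n p.1 p.2 M * forwardCorner n p (Matrix.diagonal η) +
      corner n p.1 p.2 (Matrix.diagonal η) * forwardCorner n p M =
      ∑ a : Fin n, ((if p = ((a : ℕ), (a : ℕ)) then corner n p.1 p.2 M * η a else 0) +
        if p = ((a : ℕ) + 1, (a : ℕ) + 1) then corner n p.1 p.2 M * η a else 0) := by
    intro p hp
    rw [corner_diagonal_of_le (mem_cells.1 hp).1, zero_mul, add_zero, forwardCorner_diagonal hp,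
      mul_sum]
    simp only [mul_add, mul_ite, mul_zero]
  rw [polar_cornerForm, sum_congr rfl hterm, sum_comm]
  refine sum_congr rfl fun a _ => ?_
  rw [sum_add_distrib, sum_ite_eq', sum_ite_eq', if_pos (mem_cells.2 ⟨le_rfl, a.2.le⟩),
    if_pos (mem_cells.2 ⟨le_rfl, a.2⟩), add_mul]

theorem UpperTri.map_eq_map_diagonal {α : Type*} {f : Matrix (Fin n) (Fin n) (ZMod 2) → α}
    (hf : ∀ M i j, i ≤ j → j + 2 ≤ n → f (M + block n i j) = f M)
    {M : Matrix (Fin n) (Fin n) (ZMod 2)} (hM : UpperTri n M) :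
    f M = f (Matrix.diagonal (heightPair n M)) := by
  have hspan := ((upperTri_diagonal (heightPair n M)).add_mem_span_blocks_iff hM).2
    (heightPair_diagonal _)
  rw [← map_add_of_mem_span (f := f) _ hspan (Matrix.diagonal _), ← add_assoc,
    ZModModule.add_self, zero_add]
  rintro N _ ⟨i, j, hij, hj, rfl⟩
  exact hf N i j hij hj

end Diagonal

section Iota

variable {n : ℕ}

open QuadraticMap (polar)
open Finset

theorem upperTri_iotaT (M : Matrix (Fin n) (Fin n) (ZMod 2)) : UpperTri n (iotaT n M) :=
  fun i j hji => by rw [iotaT, Matrix.of_apply, if_neg hji.not_ge]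

theorem iotaT_iotaT {M : Matrix (Fin n) (Fin n) (ZMod 2)} (hM : UpperTri n M) :
    iotaT n (iotaT n M) = M := by
  ext i j
  simp only [iotaT, Matrix.of_apply, Fin.rev_rev]
  split_ifs with hij hrev
  · rw [add_assoc, CharTwo.add_self_eq_zero, add_zero]
  · rw [Fin.val_rev, Fin.val_rev] at hrev
    omega
  · rw [hM i j (by omega)]

theorem ent_iotaT {a b : ℕ} (hab : a ≤ b) (hb : b < n) (M : Matrix (Fin n) (Fin n) (ZMod 2)) :
    ent n (iotaT n M) a b = ent n M (n - (b + 1)) (n - (a + 1)) + 1 := by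
  rw [ent, dif_pos (by omega), ent, dif_pos (by omega), iotaT, Matrix.of_apply, if_pos hab]
  rfl

theorem iotaT_add_block {i j : ℕ} (hij : i ≤ j) (hj : j + 2 ≤ n)
    (M : Matrix (Fin n) (Fin n) (ZMod 2)) :
    iotaT n (M + block n i j) = iotaT n M + block n (n - 2 - j) (n - 2 - i) := by
  ext r s
  simp only [iotaT, block, Matrix.of_apply, Matrix.add_apply, Fin.val_rev]
  split_ifs <;> first | omega | ring

theorem iotaT_diagonal (η : Fin n → ZMod 2) :
    iotaT n (Matrix.diagonal η) = iotaT n 0 + Matrix.diagonal (η ∘ Fin.rev) := by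
  ext r s
  simp only [iotaT, Matrix.of_apply, Matrix.add_apply, Matrix.diagonal_apply, Matrix.zero_apply,
    zero_add, Fin.rev_inj, Function.comp_apply]
  split_ifs with h1 h2 h3 h3 h3 <;> subst_vars <;> first | omega | ring

theorem polar_iotaT_block {i j : ℕ} (hij : i ≤ j) (hj : j + 2 ≤ n)
    (M : Matrix (Fin n) (Fin n) (ZMod 2)) :
    polar (cornerForm n) (iotaT n M) (block n (n - 2 - j) (n - 2 - i)) =
      polar (cornerForm n) M (block n i j) := by
  rw [polar_cornerForm_block (by omega) (by omega), polar_cornerForm_block hij hj,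
    ent_iotaT (by omega) (by omega), ent_iotaT (by omega) (by omega),
    show n - (n - 2 - i + 1) = i + 1 by omega, show n - (n - 2 - j + 1) = j + 1 by omega,
    show n - (n - 2 - i + 1 + 1) = i by omega, show n - (n - 2 - j + 1 + 1) = j by omega,
    add_add_add_comm, CharTwo.add_self_eq_zero, add_zero, add_comm]

theorem Moved.iotaT {M : Matrix (Fin n) (Fin n) (ZMod 2)}
    (hM : Moved (cornerForm n) (blocks n) M) : Moved (cornerForm n) (blocks n) (iotaT n M) := by
  obtain ⟨_, ⟨i, j, hij, hj, rfl⟩, h⟩ := hM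
  exact ⟨_, block_mem_blocks (by omega) (by omega), (polar_iotaT_block hij hj M).trans h⟩

theorem cornerForm_iotaT_add_block {i j : ℕ} (hij : i ≤ j) (hj : j + 2 ≤ n)
    (M : Matrix (Fin n) (Fin n) (ZMod 2)) :
    cornerForm n (iotaT n (M + block n i j)) + cornerForm n (M + block n i j) =
      cornerForm n (iotaT n M) + cornerForm n M := by
  rw [iotaT_add_block hij hj, QuadraticMap.map_add (cornerForm n),
    QuadraticMap.map_add (cornerForm n) M, polar_iotaT_block hij hj,
    cornerForm_block hij hj, cornerForm_block (by omega) (by omega)]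
  linear_combination (1 + polar (cornerForm n) M (block n i j)) * CharTwo.two_eq_zero (R := ZMod 2)

theorem corner_iotaT_zero {k l : ℕ} (hkl : k ≤ l + 1) :
    corner n k l (iotaT n 0) = (k : ZMod 2) * ((n - l : ℕ) : ZMod 2) := by
  have hent : ∀ r ∈ range k, ∀ s ∈ Ico l n, ent n (iotaT n 0) r s = 1 := by
    intro r hr s hs
    rw [mem_range] at hr
    rw [mem_Ico] at hs
    rw [ent_iotaT (by omega) hs.2, ent, dif_pos (by omega), Matrix.zero_apply, zero_add]
  rw [corner_apply, sum_congr rfl fun r hr => sum_congr rfl (hent r hr), sum_const, sum_const,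
    card_range, Nat.card_Ico, nsmul_one, nsmul_eq_mul]

theorem heightPair_iotaT {M : Matrix (Fin n) (Fin n) (ZMod 2)} (hM : UpperTri n M) (k : Fin n) :
    heightPair n (iotaT n M) k =
      heightPair n M k.rev + ((k + 1 : ℕ) : ZMod 2) * ((n - k : ℕ) : ZMod 2) := by
  have hdiag : heightPair n (iotaT n M) =
      heightPair n (iotaT n (Matrix.diagonal (heightPair n M))) :=
    hM.map_eq_map_diagonal (f := fun N => heightPair n (iotaT n N)) fun N i j hij hj => by
      rw [iotaT_add_block hij hj, heightPair_add_block (by omega) (by omega)]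
  rw [hdiag, iotaT_diagonal, heightPair_add, heightPair_diagonal, Pi.add_apply,
    heightPair_eq_corner, corner_iotaT_zero le_rfl, add_comm, Function.comp_apply]

theorem forwardCorner_iotaT_zero {k l : ℕ} (hk : 0 < k) (hkl : k ≤ l) (hl : l < n) :
    forwardCorner n (k, l) (iotaT n 0) = 1 := by
  simp only [forwardCorner, LinearMap.add_apply]
  rw [corner_iotaT_zero (by omega), corner_iotaT_zero (by omega), corner_iotaT_zero (by omega),
    corner_iotaT_zero (by omega), Nat.cast_sub hl.le, Nat.cast_sub (by omega : l - 1 ≤ n),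
    Nat.cast_sub (by omega : l + 1 ≤ n), Nat.cast_sub (by omega : 1 ≤ l)]
  push_cast
  linear_combination ((n - l : ZMod 2) * (2 * k + 1) - 1) * CharTwo.two_eq_zero (R := ZMod 2)

theorem sum_range_choose_two_mul_sub (n : ℕ) :
    ∑ l ∈ range (n + 1), (l + 1).choose 2 * (n - l) = (n + 2).choose 4 := by
  induction n with
  | zero => rfl
  | succ n ih =>
    have hterm : ∀ l ∈ range (n + 1), (l + 1).choose 2 * (n + 1 - l) =
        (l + 1).choose 2 * (n - l) + (l + 1).choose 2 := by
      intro l hl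
      rw [Nat.succ_sub (mem_range_succ_iff.1 hl), Nat.mul_succ]
    have hockey : ∑ l ∈ range (n + 1), (l + 1).choose 2 = (n + 2).choose 3 :=
      sum_range_induction _ (fun n => (n + 1).choose 3) rfl _ fun k _ => by
        rw [Nat.choose_succ_succ' (k + 1), add_comm]
    rw [sum_range_succ, Nat.sub_self, mul_zero, add_zero, sum_congr rfl hterm, sum_add_distrib, ih,
      hockey, add_comm, Nat.choose_succ_succ' (n + 2)]

theorem cornerForm_iotaT_zero : cornerForm n (iotaT n 0) = ((n + 2).choose 4 : ZMod 2) := by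
  have hterm : ∀ p ∈ cells n, corner n p.1 p.2 (iotaT n 0) * forwardCorner n p (iotaT n 0) =
      ((p.1 * (n - p.2) : ℕ) : ZMod 2) := by
    intro p hp
    obtain ⟨hkl, hl⟩ := mem_cells.1 hp
    rw [corner_iotaT_zero (by omega), Nat.cast_mul]
    rcases Nat.eq_zero_or_pos p.1 with hk | hk
    · rw [hk, Nat.cast_zero, zero_mul, zero_mul]
    rcases hl.lt_or_eq with hl | hl
    · rw [forwardCorner_iotaT_zero hk hkl hl, mul_one]
    · rw [hl, Nat.sub_self, Nat.cast_zero, mul_zero, zero_mul]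
  rw [cornerForm_apply, sum_congr rfl hterm, ← Nat.cast_sum,
    sum_finset_product_right _ (range (n + 1)) (fun l => range (l + 1))
      fun p => by rw [mem_cells, mem_range, mem_range]; omega,
    ← sum_range_choose_two_mul_sub]
  refine congrArg _ (sum_congr rfl fun l _ => ?_)
  dsimp only
  rw [← sum_mul, sum_range_id, ← Nat.choose_two_right]

theorem cornerForm_iotaT_diagonal (η : Fin n → ZMod 2) :
    cornerForm n (iotaT n (Matrix.diagonal η)) = (n + 2).choose 4 + (n + 1) * ∑ k, η k := by
  have hcoef (a : Fin n) : corner n a a (iotaT n 0) + corner n (a + 1) (a + 1) (iotaT n 0) =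
      (n : ZMod 2) + 1 := by
    rw [corner_iotaT_zero (by omega), corner_iotaT_zero (by omega), Nat.cast_sub a.2.le,
      Nat.cast_sub a.2]
    push_cast
    linear_combination (a * n - a ^ 2 - a - 1 : ZMod 2) * CharTwo.two_eq_zero (R := ZMod 2)
  rw [iotaT_diagonal, QuadraticMap.map_add (cornerForm n), cornerForm_diagonal, add_zero,
    cornerForm_iotaT_zero, polar_cornerForm_diagonal]
  simp only [hcoef]
  rw [← mul_sum, ← Equiv.sum_comp Fin.revPerm η]
  rfl

theorem cornerForm_iotaT {M : Matrix (Fin n) (Fin n) (ZMod 2)} (hM : UpperTri n M) :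
    cornerForm n (iotaT n M) =
      cornerForm n M + ((n + 2).choose 4 + (n + 1) * ∑ k, heightPair n M k) := by
  have hdiag := hM.map_eq_map_diagonal (f := fun N => cornerForm n (iotaT n N) + cornerForm n N)
    fun N i j hij hj => cornerForm_iotaT_add_block hij hj N
  rw [cornerForm_diagonal, add_zero, cornerForm_iotaT_diagonal] at hdiag
  rw [← hdiag, add_left_comm, CharTwo.add_self_eq_zero, add_zero]

theorem natCast_choose_four (a : ℕ) : (a.choose 4 : ZMod 2) = (a / 4 : ℕ) := by
  have lucas (a k : ℕ) : (a.choose k : ZMod 2) =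
      ((a % 2).choose (k % 2) : ZMod 2) * ((a / 2).choose (k / 2) : ZMod 2) := by
    exact_mod_cast (ZMod.natCast_eq_natCast_iff _ _ 2).2
      Choose.choose_modEq_choose_mod_mul_choose_div_nat
  rw [lucas, lucas (a / 2), Nat.div_div_eq_div_mul]
  simp only [Nat.reduceMod, Nat.reduceDiv, Nat.choose_zero_right, Nat.choose_one_right,
    Nat.cast_one, one_mul, Nat.reduceMul]

theorem heightPair_iotaT_of_even (hn : Even n) {M : Matrix (Fin n) (Fin n) (ZMod 2)}
    (hM : UpperTri n M) : heightPair n (iotaT n M) = heightPair n M ∘ Fin.rev := by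
  ext k
  have hprod : Even ((k + 1) * (n - k) : ℕ) := by
    rw [Nat.even_mul, Nat.even_add_one, Nat.even_sub k.2.le]
    tauto
  rw [heightPair_iotaT hM, ← Nat.cast_mul, (ZMod.natCast_eq_zero_iff_even).2 hprod, add_zero,
    Function.comp_apply]

/-- The height vectors fixed by the reversal of the indices. -/
def palindromes (n : ℕ) : Set (Fin n → ZMod 2) :=
  {η | η ∘ Fin.rev = η}

theorem sum_eq_zero_of_mem_palindromes (hn : Even n) {η : Fin n → ZMod 2}
    (hη : η ∈ palindromes n) : ∑ k, η k = 0 := by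
  refine sum_involution (fun k _ => k.rev) (fun k _ => ?_) (fun k _ _ hk => ?_)
    (fun k _ => mem_univ _) fun k _ => Fin.rev_rev k
  · rw [← Function.comp_apply (f := η), hη, CharTwo.add_self_eq_zero]
  · obtain ⟨m, hm⟩ := hn
    have := congrArg Fin.val hk
    rw [Fin.val_rev] at this
    omega

theorem ncard_palindromes (hn : Even n) : (palindromes n).ncard = 2 ^ (n / 2) := by
  obtain ⟨m, rfl⟩ := hn
  have hrange : palindromes (m + m) =
      Set.range fun ζ : Fin m → ZMod 2 => Fin.append ζ (ζ ∘ Fin.rev) := by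
    ext η
    constructor
    · intro hη
      have hrev (i : Fin m) : (Fin.natAdd m i).rev = Fin.castAdd m i.rev := Fin.ext <| by
        rw [Fin.val_rev, Fin.val_natAdd, Fin.val_castAdd, Fin.val_rev]
        omega
      refine ⟨fun i => η (Fin.castAdd m i), .trans ?_ Fin.append_castAdd_natAdd⟩
      refine congrArg (Fin.append _) (funext fun i => ?_)
      rw [← congrFun hη (Fin.natAdd m i), Function.comp_apply, Function.comp_apply, hrev]
    · rintro ⟨ζ, rfl⟩
      rw [palindromes, Set.mem_ofPred_eq, Fin.append_comp_rev, Function.comp_assoc,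
        Fin.rev_involutive.comp_self, Fin.cast_refl, Function.comp_id, Function.comp_id]
  have hinj : Function.Injective fun ζ : Fin m → ZMod 2 => Fin.append ζ (ζ ∘ Fin.rev) :=
    fun ζ ξ h => funext fun i => by simpa only [Fin.append_left] using congrFun h (Fin.castAdd m i)
  rw [hrange, Set.ncard_range_of_injective hinj, Nat.card_fun, Nat.card_zmod, Nat.card_fin,
    ← two_mul, Nat.mul_div_cancel_left m two_pos]

end Iota

section OrbitClasses

variable {n : ℕ}

/-- The upper triangular matrices with heights `η` and corner form `q` that are not fixed by all
generators of `𝔊_n`. For `5 ≤ n` these are exactly the orbits with more than one element. -/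
def orbitClass (n : ℕ) (η : Fin n → ZMod 2) (q : ZMod 2) :
    Set (Matrix (Fin n) (Fin n) (ZMod 2)) :=
  {M | UpperTri n M ∧ Moved (cornerForm n) (blocks n) M ∧ heightPair n M = η ∧ cornerForm n M = q}

theorem setOf_inOrbit_eq_orbitClass (hn : 5 ≤ n) {M : Matrix (Fin n) (Fin n) (ZMod 2)}
    (hM : UpperTri n M) (hmoved : Moved (cornerForm n) (blocks n) M) :
    {N | InOrbit n M N} = orbitClass n (heightPair n M) (cornerForm n M) := by
  ext N
  rw [Set.mem_ofPred_eq, inOrbit_iff_linked]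
  constructor
  · intro h
    have hN : UpperTri n N :=
      hM.add_iff.1 (add_comm M N ▸ upperTri_of_mem_span_blocks h.add_mem_span)
    exact ⟨hN, h.moved hmoved, ((hM.add_mem_span_blocks_iff hN).1 h.add_mem_span).symm,
      h.map_eq cornerForm_eq_one_of_mem_blocks⟩
  · rintro ⟨hN, hNmoved, hheight, hQ⟩
    exact ((isCoreEmbedding_stripIsometry hn).linked_iff_of_moved hmoved hNmoved).2
      ⟨(hM.add_mem_span_blocks_iff hN).2 hheight.symm, hQ.symm⟩

theorem orbitClass_nonempty (hn : 5 ≤ n) (η : Fin n → ZMod 2) (q : ZMod 2) :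
    (orbitClass n η q).Nonempty := by
  obtain ⟨M, hspan, hmoved, hQ⟩ :=
    (isCoreEmbedding_stripIsometry hn).exists_moved_map_eq (Matrix.diagonal η) q
  have hM : UpperTri n M := (upperTri_diagonal η).add_iff.1
    (add_comm (Matrix.diagonal η) M ▸ upperTri_of_mem_span_blocks hspan)
  refine ⟨M, hM, hmoved, ?_, hQ⟩
  rw [← ((upperTri_diagonal η).add_mem_span_blocks_iff hM).1 hspan, heightPair_diagonal]

theorem orbitClass_injective (hn : 5 ≤ n) :
    Function.Injective fun p : (Fin n → ZMod 2) × ZMod 2 => orbitClass n p.1 p.2 := by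
  rintro ⟨η, q⟩ ⟨ξ, r⟩ (h : orbitClass n η q = orbitClass n ξ r)
  obtain ⟨M, hM⟩ := orbitClass_nonempty hn η q
  obtain ⟨-, -, hξ, hr⟩ := h.subset hM
  obtain ⟨-, -, hη, hq⟩ := hM
  rw [← hη, ← hq, ← hξ, ← hr]

theorem iotaT_ne_self (hn : 0 < n) (M : Matrix (Fin n) (Fin n) (ZMod 2)) : iotaT n M ≠ M := by
  intro h
  have hent := ent_iotaT (n - 1).zero_le (by omega) M
  rw [h, Nat.sub_add_cancel hn, Nat.sub_self, zero_add] at hent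
  exact one_ne_zero (left_eq_add.1 hent)

theorem moved_of_iotaT_image_eq (hn : 0 < n) {M : Matrix (Fin n) (Fin n) (ZMod 2)}
    (h : iotaT n '' {N | InOrbit n M N} = {N | InOrbit n M N}) :
    Moved (cornerForm n) (blocks n) M := by
  by_contra hM
  have horbit : InOrbit n M (iotaT n M) := h.subset ⟨M, .refl, rfl⟩
  exact iotaT_ne_self hn M ((inOrbit_iff_linked.1 horbit).eq_of_not_moved hM)

theorem iotaT_mem_orbitClass (hn : Even n) (hchoose : Even ((n + 2).choose 4))
    {η : Fin n → ZMod 2} (hη : η ∈ palindromes n) {q : ZMod 2}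
    {M : Matrix (Fin n) (Fin n) (ZMod 2)} (hM : M ∈ orbitClass n η q) :
    iotaT n M ∈ orbitClass n η q := by
  obtain ⟨hM, hmoved, rfl, rfl⟩ := hM
  refine ⟨upperTri_iotaT M, hmoved.iotaT, (heightPair_iotaT_of_even hn hM).trans hη, ?_⟩
  rw [cornerForm_iotaT hM, sum_eq_zero_of_mem_palindromes hn hη,
    ZMod.natCast_eq_zero_iff_even.2 hchoose, mul_zero, add_zero, add_zero]

theorem iotaT_image_orbitClass_eq_iff (hn : 5 ≤ n) (heven : Even n)
    (hchoose : Even ((n + 2).choose 4)) {η : Fin n → ZMod 2} {q : ZMod 2} :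
    iotaT n '' orbitClass n η q = orbitClass n η q ↔ η ∈ palindromes n := by
  constructor
  · intro h
    obtain ⟨M, hM⟩ := orbitClass_nonempty hn η q
    obtain ⟨-, -, hιM, -⟩ := h.subset ⟨M, hM, rfl⟩
    rwa [heightPair_iotaT_of_even heven hM.1, hM.2.2.1] at hιM
  · intro hη
    have hmaps : Set.MapsTo (iotaT n) (orbitClass n η q) (orbitClass n η q) :=
      fun M hM => iotaT_mem_orbitClass heven hchoose hη hM
    refine hmaps.image_subset.antisymm fun M hM => ?_
    exact ⟨iotaT n M, hmaps hM, iotaT_iotaT hM.1⟩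

theorem iota_invariant_orbits_eq_image (hn : 5 ≤ n) (heven : Even n)
    (hchoose : Even ((n + 2).choose 4)) :
    {O : Set (Matrix (Fin n) (Fin n) (ZMod 2)) |
        (∃ M, UpperTri n M ∧ O = {N | InOrbit n M N}) ∧ iotaT n '' O = O} =
      (fun p : (Fin n → ZMod 2) × ZMod 2 => orbitClass n p.1 p.2) ''
        palindromes n ×ˢ Set.univ := by
  ext O
  constructor
  · rintro ⟨⟨M, hM, rfl⟩, hι⟩
    have hclass := setOf_inOrbit_eq_orbitClass hn hM (moved_of_iotaT_image_eq (by omega) hι)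
    rw [hclass] at hι ⊢
    exact ⟨(heightPair n M, cornerForm n M),
      ⟨(iotaT_image_orbitClass_eq_iff hn heven hchoose).1 hι, Set.mem_univ _⟩, rfl⟩
  · rintro ⟨⟨η, q⟩, ⟨hη, -⟩, rfl⟩
    obtain ⟨M, hM, hmoved, rfl, rfl⟩ := orbitClass_nonempty hn η q
    exact ⟨⟨M, hM, (setOf_inOrbit_eq_orbitClass hn hM hmoved).symm⟩,
      (iotaT_image_orbitClass_eq_iff hn heven hchoose).2 hη⟩

end OrbitClasses

theorem count_iota_invariant_orbits (n : ℕ) (hn : 6 ≤ n) (heven : n % 2 = 0)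
    (h8 : n % 8 = 0 ∨ n % 8 = 6) :
    Set.ncard {O : Set (Matrix (Fin n) (Fin n) (ZMod 2)) |
        (∃ M, UpperTri n M ∧ O = {N | InOrbit n M N}) ∧ iotaT n '' O = O}
      = 2 ^ (n / 2 + 1) := by
  have hchoose : Even ((n + 2).choose 4) := by
    rw [← ZMod.natCast_eq_zero_iff_even, natCast_choose_four, ZMod.natCast_eq_zero_iff_even,
      Nat.even_iff]
    omega
  rw [iota_invariant_orbits_eq_image (by omega) (Nat.even_iff.2 heven) hchoose,
    Set.ncard_image_of_injective _ (orbitClass_injective (by omega)), Set.ncard_prod,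
    ncard_palindromes (Nat.even_iff.2 heven), Set.ncard_univ, Nat.card_zmod, pow_succ]
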